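/- arXiv:1607.06883 — 6 statements merged into one kernel-verified Lean document; each statement's English description precedes it below -/
import Mathlib

section
/- There exists a constant c > 0 such that the following holds for every n ≥ 1. Let G be a finite connected simple graph on n vertices with an injective real-valued edge-weight function, and let T be its unique minimum spanning tree. Then there exists a partition of the vertex set of G into at most ⌈√n⌉ parts such that every part induces a connected subgraph of T whose unweighted diameter is at most c·√n; in other words, G admits a (⌈√n⌉, O(√n))-MST forest. -/
/-- The total weight of (the edges of) a graph `T` under edge-weight function `w`. -/
noncomputable def mstWeight {V : Type*} (w : Sym2 V → ℝ) (T : SimpleGraph V) : ℝ :=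
  ∑ᶠ e ∈ T.edgeSet, w e

/-!
Put `r = ⌈√n⌉ - 1`, take a maximal set of centers at pairwise distance greater than `2 * r` in
`T`, and cut `T` into the Voronoi cells of the centers, with ties broken by a fixed order on the
centers. By maximality every vertex is within distance `2 * r` of a center, and a cell contains
every geodesic from its vertices to its center, so cells are connected with diameter at most
`4 * r`. If there are at least two centers, each center has vertices at distances `0, …, r` from
it, and by separation all of these are distinct for distinct centers; hence there are at most
`n / (r + 1)` centers.
-/

section

open SimpleGraph SetRel

variable {V : Type*} {G : SimpleGraph V}

section Geodesics

variable {u v : V}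

lemma dist_add_dist_of_mem_support {p : G.Walk u v} (hp : p.length = G.dist u v) {x : V}
    (hx : x ∈ p.support) : G.dist u x + G.dist x v = G.dist u v := by
  classical
  rw [← length_eq_dist_of_subwalk hp (p.isSubwalk_takeUntil hx),
    ← length_eq_dist_of_subwalk hp (p.isSubwalk_dropUntil hx), ← hp, ← Walk.length_append,
    p.take_spec hx]

lemma exists_dist_eq_of_le_dist {i : ℕ} (hi : i ≤ G.dist u v) : ∃ x, G.dist u x = i := by
  rcases i.eq_zero_or_pos with rfl | hpos
  · exact ⟨u, G.dist_self⟩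
  obtain ⟨p, hp⟩ := exists_walk_of_dist_ne_zero (hpos.trans_le hi).ne'
  refine ⟨p.getVert i, ?_⟩
  rw [← length_eq_dist_of_subwalk hp (p.isSubwalk_take i), p.take_length, hp,
    min_eq_left hi]

lemma length_induce {S : Set V} (p : G.Walk u v) (hp : ∀ x ∈ p.support, x ∈ S) :
    (p.induce S hp).length = p.length := by
  induction p with
  | nil => rfl
  | cons h p ih => simp [ih]

end Geodesics

section StarShaped

/-- `S` is geodesically star-shaped about `c`: it contains every vertex lying on a geodesic of `G`
from a vertex of `S` to `c`. Such sets induce connected subgraphs preserving distances to `c`. -/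
def IsStarShaped (G : SimpleGraph V) (c : V) (S : Set V) : Prop :=
  ∀ v ∈ S, ∀ u, G.dist v u + G.dist u c = G.dist v c → u ∈ S

variable {c : V} {S : Set V}

lemma IsStarShaped.edist_induce_le (hG : G.Connected) (hS : IsStarShaped G c S) (hc : c ∈ S)
    (v : S) : (G.induce S).edist v ⟨c, hc⟩ ≤ G.dist v c := by
  obtain ⟨p, hp⟩ := hG.exists_walk_length_eq_dist v c
  have hpS : ∀ x ∈ p.support, x ∈ S := fun x hx ↦
    hS v v.2 x (dist_add_dist_of_mem_support hp hx)
  rw [← hp, ← length_induce p hpS]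
  exact edist_le _

lemma IsStarShaped.ediam_induce_le (hG : G.Connected) (hS : IsStarShaped G c S) (hc : c ∈ S)
    {k : ℕ} (hk : ∀ v ∈ S, G.dist v c ≤ k) : (G.induce S).ediam ≤ 2 * k := by
  have heccent : (G.induce S).eccent ⟨c, hc⟩ ≤ k := by
    refine (eccent_le_iff _ _).2 fun v ↦ ?_
    rw [edist_comm]
    exact (hS.edist_induce_le hG hc v).trans (by exact_mod_cast hk v v.2)
  exact (ediam_le_two_mul_eccent _).trans (by gcongr)

end StarShaped

section Voronoi

variable {C : Set V} [Nonempty C] [LinearOrder C] [WellFoundedLT C] {v : V}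

/-- The element of `C` closest to `v`, the least one in the order of `C` if there are several; its
fibers are the Voronoi cells of `C`. A consistent rule for ties is needed to make them connected. -/
noncomputable def nearestCenter (G : SimpleGraph V) (C : Set V) [Nonempty C] [LinearOrder C]
    [WellFoundedLT C] (v : V) : C :=
  Function.argmin fun c : C ↦ toLex (G.dist v c, c)

lemma toLex_nearestCenter_le (c : C) :
    toLex (G.dist v (nearestCenter G C v), nearestCenter G C v) ≤ toLex (G.dist v c, c) :=
  Function.argmin_le (fun c : C ↦ toLex (G.dist v c, c)) c

lemma dist_nearestCenter_le (c : C) : G.dist v (nearestCenter G C v) ≤ G.dist v c :=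
  Prod.Lex.monotone_fst _ _ (toLex_nearestCenter_le c)

lemma nearestCenter_le_of_dist_eq {c : C} (hc : G.dist v (nearestCenter G C v) = G.dist v c) :
    nearestCenter G C v ≤ c := by
  simpa [Prod.Lex.toLex_le_toLex, hc] using toLex_nearestCenter_le (G := G) (v := v) c

lemma isStarShaped_nearestCenter_fiber (hG : G.Connected) (c : C) :
    IsStarShaped G c {v | nearestCenter G C v = c} := by
  rintro v rfl u hu
  have hle_u := dist_nearestCenter_le (G := G) (v := u) (nearestCenter G C v)
  have hle_v := dist_nearestCenter_le (G := G) (v := v) (nearestCenter G C u)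
  have htri := hG.dist_triangle (u := v) (v := u) (w := nearestCenter G C u)
  exact le_antisymm (nearestCenter_le_of_dist_eq (by lia)) (nearestCenter_le_of_dist_eq (by lia))

lemma nearestCenter_self (hG : G.Connected) (c : C) : nearestCenter G C c = c := by
  have hdist : G.dist c (nearestCenter G C c) = 0 := by
    simpa using dist_nearestCenter_le (G := G) (v := c) c
  exact Subtype.ext (hG.dist_eq_zero_iff.1 hdist).symm

end Voronoi

section Nets

/-- The relation of being at graph distance at most `k`, which makes the notions of separated sets
and covers from `SetRel` available in graphs. Vertices in different components are related, since
their `dist` is `0`. -/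
def distLE (G : SimpleGraph V) (k : ℕ) : SetRel V V :=
  {p | G.dist p.1 p.2 ≤ k}

instance (k : ℕ) : (distLE G k).IsRefl :=
  ⟨fun v ↦ (G.dist_self (v := v)).trans_le k.zero_le⟩

instance (k : ℕ) : (distLE G k).IsSymm :=
  ⟨fun _ _ h ↦ G.dist_comm.trans_le h⟩

lemma exists_isSeparated_isCover (R : SetRel V V) [R.IsRefl] [R.IsSymm] (s : Set V) :
    ∃ C ⊆ s, IsSeparated R C ∧ IsCover R s C := by
  obtain ⟨C, hC⟩ := zorn_subset {C | C ⊆ s ∧ IsSeparated R C} fun 𝒞 h𝒞 hchain ↦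
    ⟨⋃₀ 𝒞, ⟨Set.sUnion_subset fun C hC ↦ (h𝒞 hC).1,
      (Set.pairwise_sUnion hchain.directedOn).2 fun C hC ↦ (h𝒞 hC).2⟩,
      fun _ ↦ Set.subset_sUnion_of_mem⟩
  exact ⟨C, hC.prop.1, hC.prop.2, .of_maximal_isSeparated hC⟩

variable {C : Set V} {r : ℕ}

lemma lt_dist_of_isSeparated {k : ℕ} (hC : IsSeparated (distLE G k) C) {c c' : V} (hc : c ∈ C)
    (hc' : c' ∈ C) (hne : c ≠ c') : k < G.dist c c' :=
  not_le.1 (hC hc hc' hne)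

lemma ncard_mul_le_card_of_isSeparated [Finite V] (hG : G.Connected)
    (hC : IsSeparated (distLE G (2 * r)) C) (hnontrivial : C.Nontrivial) :
    C.ncard * (r + 1) ≤ Nat.card V := by
  have hsphere (c : C) (i : Fin (r + 1)) : ∃ x, G.dist c x = i := by
    obtain ⟨c', hc', hne⟩ := hnontrivial.exists_ne c
    have := lt_dist_of_isSeparated hC c.2 hc' hne.symm
    exact exists_dist_eq_of_le_dist (v := c') (by lia)
  choose x hx using hsphere
  have hinj : Function.Injective fun p : C × Fin (r + 1) ↦ x p.1 p.2 := by
    rintro ⟨c, i⟩ ⟨c', j⟩ (heq : x c i = x c' j)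
    have hi : G.dist c (x c' j) = i := heq ▸ hx c i
    obtain rfl : c = c' := by
      by_contra hne
      have hfar := lt_dist_of_isSeparated hC c.2 c'.2 (Subtype.coe_ne_coe.2 hne)
      have htri := hG.dist_triangle (u := (c : V)) (v := x c' j) (w := c')
      rw [hi, G.dist_comm (u := x c' j), hx] at htri
      lia
    rw [hx] at hi
    rw [Fin.ext hi]
  simpa [Nat.card_coe_set_eq] using Nat.card_le_card_of_injective _ hinj

lemma ncard_le_max_of_isSeparated [Finite V] (hG : G.Connected)
    (hC : IsSeparated (distLE G (2 * r)) C) : C.ncard ≤ max 1 (Nat.card V / (r + 1)) := by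
  rcases C.subsingleton_or_nontrivial with hsub | hnontrivial
  · exact le_max_of_le_left (Set.ncard_le_one_iff_subsingleton.2 hsub)
  · exact le_max_of_le_right <| (Nat.le_div_iff_mul_le r.succ_pos).2 <|
      ncard_mul_le_card_of_isSeparated hG hC hnontrivial

end Nets

section Partition

lemma ediam_induce_nearestCenter_fiber_le {C : Set V} [Nonempty C] [LinearOrder C]
    [WellFoundedLT C] (hG : G.Connected) {k : ℕ} (hC : IsCover (distLE G k) Set.univ C) (c : C) :
    (G.induce {v | nearestCenter G C v = c}).ediam ≤ 2 * k := by
  refine (isStarShaped_nearestCenter_fiber hG c).ediam_induce_le hG (nearestCenter_self hG c) ?_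
  rintro v rfl
  obtain ⟨c', hc', hdist⟩ := hC (Set.mem_univ v)
  exact (dist_nearestCenter_le ⟨c', hc'⟩).trans hdist

lemma exists_isPartition_ediam_induce_le [Finite V] (hG : G.Connected) (r : ℕ) :
    ∃ P : Finset (Set V), Setoid.IsPartition (P : Set (Set V)) ∧
      P.card ≤ max 1 (Nat.card V / (r + 1)) ∧ ∀ F ∈ P, (G.induce F).ediam ≤ (4 * r : ℕ) := by
  obtain ⟨C, -, hsep, hcover⟩ := exists_isSeparated_isCover (distLE G (2 * r)) Set.univ
  have := hG.nonempty
  have : Nonempty C := (hcover.nonempty Set.univ_nonempty).to_subtype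
  obtain ⟨_, _⟩ := exists_wellFoundedLT C
  have hfinite := Setoid.finite_classes_ker (nearestCenter G C)
  refine ⟨hfinite.toFinset, ?_, ?_, fun F hF ↦ ?_⟩
  · simpa only [Set.Finite.coe_toFinset] using Setoid.isPartition_classes _
  · have := Fintype.ofFinite C
    have := hfinite.fintype
    calc hfinite.toFinset.card
      _ = Fintype.card (Setoid.ker (nearestCenter G C)).classes := hfinite.card_toFinset
      _ ≤ Fintype.card C := Setoid.card_classes_ker_le _
      _ = C.ncard := (Nat.card_coe_set_eq C ▸ Nat.card_eq_fintype_card).symm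
      _ ≤ max 1 (Nat.card V / (r + 1)) := ncard_le_max_of_isSeparated hG hsep
  · obtain ⟨c, rfl⟩ := Setoid.classes_ker_subset_fiber_set _ (hfinite.mem_toFinset.1 hF)
    refine (ediam_induce_nearestCenter_fiber_le hG hcover c).trans_eq ?_
    norm_cast
    ring

end Partition

end

lemma le_ceil_sqrt_mul_self (n : ℕ) : n ≤ ⌈√(n : ℝ)⌉₊ * ⌈√(n : ℝ)⌉₊ := by
  have h : (n : ℝ) ≤ (⌈√(n : ℝ)⌉₊ : ℝ) ^ 2 :=
    (Real.sqrt_le_left (Nat.cast_nonneg _)).1 (Nat.le_ceil _)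
  rw [← sq]
  exact_mod_cast h

theorem mst_forest_exists_general {V : Type*} [Finite V] {T : SimpleGraph V} (hT : T.Connected) :
    ∃ P : Finset (Set V),
      Setoid.IsPartition (P : Set (Set V)) ∧
      P.card ≤ ⌈√(Nat.card V : ℝ)⌉₊ ∧
      ∀ F ∈ P, (T.induce F).Connected ∧ ((T.induce F).diam : ℝ) ≤ 4 * √(Nat.card V : ℝ) := by
  have := hT.nonempty
  obtain ⟨r, hr⟩ : ∃ r, ⌈√(Nat.card V : ℝ)⌉₊ = r + 1 :=
    Nat.exists_eq_add_one.2 (Nat.ceil_pos.2 (Real.sqrt_pos.2 (mod_cast Nat.card_pos)))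
  have hcard : Nat.card V / (r + 1) ≤ r + 1 :=
    Nat.div_le_of_le_mul (hr ▸ le_ceil_sqrt_mul_self _)
  have hr_le : (r : ℝ) ≤ √(Nat.card V : ℝ) := (Nat.lt_ceil.1 (hr ▸ r.lt_succ_self)).le
  obtain ⟨P, hP, hPcard, hPdiam⟩ := exists_isPartition_ediam_induce_le hT r
  refine ⟨P, hP, by lia, fun F hF ↦ ?_⟩
  have : Nonempty F := (Setoid.nonempty_of_mem_partition hP hF).to_subtype
  have hne_top := ne_top_of_le_ne_top (ENat.natCast_ne_top _) (hPdiam F hF)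
  have hdiam : (T.induce F).diam ≤ 4 * r := ENat.toNat_le_of_le_natCast (hPdiam F hF)
  refine ⟨SimpleGraph.connected_of_ediam_ne_top hne_top, ?_⟩
  calc ((T.induce F).diam : ℝ)
    _ ≤ 4 * r := mod_cast hdiam
    _ ≤ 4 * √(Nat.card V : ℝ) := by gcongr

/-- There is a constant `c > 0` such that for every `n ≥ 1`, every finite connected simple
graph `G` on `n` vertices with injective real edge weights, with (unique) minimum spanning
tree `T`, admits a partition of its vertex set into at most `⌈√n⌉` parts, each of which
induces a connected subgraph of `T` of unweighted (strong) diameter at most `c·√n`;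
i.e., `G` admits a `(⌈√n⌉, O(√n))`-MST forest. -/
theorem mst_forest_exists :
    ∃ c : ℝ, 0 < c ∧
      ∀ (n : ℕ), 1 ≤ n →
      ∀ (V : Type) [Fintype V], Fintype.card V = n →
      ∀ (G : SimpleGraph V), G.Connected →
      ∀ (w : Sym2 V → ℝ), Set.InjOn w G.edgeSet →
      ∀ (T : SimpleGraph V), T ≤ G → T.IsTree →
        (∀ T' : SimpleGraph V, T' ≤ G → T'.IsTree → mstWeight w T ≤ mstWeight w T') →
      ∃ P : Finset (Set V),
        Setoid.IsPartition (↑P : Set (Set V)) ∧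
        P.card ≤ ⌈Real.sqrt n⌉₊ ∧
        ∀ F ∈ P, (T.induce F).Connected ∧
          ((T.induce F).diam : ℝ) ≤ c * Real.sqrt n := by
  refine ⟨4, by norm_num, ?_⟩
  rintro _ - V _ rfl - - - - T - hT -
  simpa only [Nat.card_eq_fintype_card] using mst_forest_exists_general hT.connected
end

section
/- Let G be a finite simple graph, P a partition of the vertex set of G, A a set of parts of P, and for each part F ∈ A let e(F) be an edge of G with exactly one endpoint in F. Let H be the fragment graph, S the set of selected H-edges, M a matching of H contained in S that is maximal among matchings contained in S, and let K be the marked edge set. Then (a) every connected component of the spanning subgraph of H with edge set K that contains at least one edge has diameter at most 3, and (b) every part F ∈ A is an endpoint of some edge of K. -/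
/- A partition of the vertex set of `G` is modeled by a surjection `f : V → ι`;
the parts are the fibers `f ⁻¹' {i}`. `A : Set ι` is a set of parts, and for
each part `i ∈ A`, `e i : V × V` is a selected edge of `G` with exactly one
endpoint in the part `i` (namely `(e i).1`). -/

/-- The fragment graph `H`: its vertices are the parts, and two distinct parts are
adjacent iff some selected edge has one endpoint in each of them. -/
def fragmentGraph {V ι : Type*} (f : V → ι) (A : Set ι) (e : ι → V × V) : SimpleGraph ι :=
  SimpleGraph.fromRel (fun i j => ∃ k ∈ A, f (e k).1 = i ∧ f (e k).2 = j)

/-- The set `S` of `H`-edges arising from the selected edges. -/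
def selectedEdges {V ι : Type*} (f : V → ι) (A : Set ι) (e : ι → V × V) : Set (Sym2 ι) :=
  {s | ∃ k ∈ A, s = s(f (e k).1, f (e k).2)}

/-- `M` is a matching of the graph `H`: a set of edges of `H`, no two distinct edges of
which share an endpoint. -/
def IsMatchingIn {ι : Type*} (H : SimpleGraph ι) (M : Set (Sym2 ι)) : Prop :=
  M ⊆ H.edgeSet ∧ ∀ e₁ ∈ M, ∀ e₂ ∈ M, e₁ ≠ e₂ → ∀ x : ι, x ∈ e₁ → x ∉ e₂

/-- A part `i` is covered by the matching `M` if it is an endpoint of some edge of `M`. -/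
def coveredBy {ι : Type*} (M : Set (Sym2 ι)) (i : ι) : Prop := ∃ s ∈ M, i ∈ s

/-- The marked edge set `K`: the matching `M` together with, for each part of `A` not
covered by `M`, the `H`-edge arising from its selected edge. -/
def markedEdges {V ι : Type*} (f : V → ι) (A : Set ι) (e : ι → V × V)
    (M : Set (Sym2 ι)) : Set (Sym2 ι) :=
  M ∪ {s | ∃ k ∈ A, ¬ coveredBy M k ∧ s = s(f (e k).1, f (e k).2)}

/-! By maximality of `M`, the selected edge of an uncovered part leads to a covered one, so an
uncovered part has at most one neighbour in the marked graph; and the only marked edges between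
covered parts are those of `M`, so a covered part has at most one covered neighbour. On a path with
four edges the three inner vertices have two neighbours each, hence are covered, and the middle one
would have two covered neighbours. -/

theorem length_le_three_of_isPath {α : Type*} {G : SimpleGraph α} {C : Set α}
    (hleaf : ∀ x ∉ C, (G.neighborSet x).Subsingleton)
    (hcore : ∀ x ∈ C, (G.neighborSet x ∩ C).Subsingleton)
    {u v : α} {p : G.Walk u v} (hp : p.IsPath) : p.length ≤ 3 := by
  by_contra! hlen
  have adj_prev {n : ℕ} (hn : n < 3) : G.Adj (p.getVert (n + 1)) (p.getVert n) :=
    (p.adj_getVert_succ (by lia)).symm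
  have adj_next {n : ℕ} (hn : n < 3) : G.Adj (p.getVert (n + 1)) (p.getVert (n + 2)) :=
    p.adj_getVert_succ (by lia)
  have ne_skip {n : ℕ} (hn : n < 3) : p.getVert n ≠ p.getVert (n + 2) := fun h => by
    have := hp.getVert_injOn (show n ≤ p.length by lia) (show n + 2 ≤ p.length by lia) h
    lia
  have inner_mem {n : ℕ} (hn : n < 3) : p.getVert (n + 1) ∈ C := by
    by_contra hC
    exact ne_skip hn (hleaf _ hC (adj_prev hn) (adj_next hn))
  have h₁ : p.getVert 1 ∈ C := inner_mem (n := 0) (by lia)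
  have h₂ : p.getVert 2 ∈ C := inner_mem (n := 1) (by lia)
  have h₃ : p.getVert 3 ∈ C := inner_mem (n := 2) (by lia)
  exact ne_skip (n := 1) (by lia)
    (hcore _ h₂ ⟨adj_prev (by lia), h₁⟩ ⟨adj_next (by lia), h₃⟩)

section Matching

variable {ι : Type*} {H : SimpleGraph ι} {S M : Set (Sym2 ι)} {x y z : ι}

theorem IsMatchingIn.eq_of_mem_of_mem (hM : IsMatchingIn H M) (hy : s(x, y) ∈ M)
    (hz : s(x, z) ∈ M) : y = z := by
  by_contra hne
  exact hM.2 _ hy _ hz (fun h => hne (Sym2.congr_right.1 h)) x (Sym2.mem_mk_left x y)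
    (Sym2.mem_mk_left x z)

theorem IsMatchingIn.insert (hM : IsMatchingIn H M) (hxy : H.Adj x y) (hx : ¬ coveredBy M x)
    (hy : ¬ coveredBy M y) : IsMatchingIn H (insert s(x, y) M) := by
  have disjoint : ∀ s ∈ M, ∀ z ∈ s(x, y), z ∉ s := by
    intro s hs z hz hzs
    rcases Sym2.mem_iff.1 hz with rfl | rfl
    · exact hx ⟨s, hs, hzs⟩
    · exact hy ⟨s, hs, hzs⟩
  refine ⟨Set.insert_subset hxy hM.1, ?_⟩
  rintro s (rfl | hs) t (rfl | ht) hne z hzs hzt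
  · exact hne rfl
  · exact disjoint t ht z hzs hzt
  · exact disjoint s hs z hzt hzs
  · exact hM.2 s hs t ht hne z hzs hzt

/-- `M` is maximal, with respect to inclusion, among the matchings of `H` contained in the edge
set `S`. -/
def IsMaximalMatchingIn (H : SimpleGraph ι) (S M : Set (Sym2 ι)) : Prop :=
  Maximal (fun N => IsMatchingIn H N ∧ N ⊆ S) M

theorem IsMaximalMatchingIn.coveredBy_or_coveredBy (hM : IsMaximalMatchingIn H S M)
    (hxy : H.Adj x y) (hS : s(x, y) ∈ S) : coveredBy M x ∨ coveredBy M y := by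
  by_contra! ⟨hx, hy⟩
  have hins : insert s(x, y) M ⊆ M :=
    hM.2 ⟨hM.prop.1.insert hxy hx hy, Set.insert_subset hS hM.prop.2⟩ (Set.subset_insert _ _)
  exact hx ⟨s(x, y), hins (Set.mem_insert _ _), Sym2.mem_mk_left x y⟩

end Matching

section MarkedEdges

variable {V ι : Type*} {f : V → ι} {A : Set ι} {e : ι → V × V} {M : Set (Sym2 ι)} {x y : ι}

theorem coveredBy_snd_of_not_coveredBy (hfst : ∀ i ∈ A, f (e i).1 = i)
    (hsnd : ∀ i ∈ A, f (e i).2 ≠ i)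
    (hM : IsMaximalMatchingIn (fragmentGraph f A e) (selectedEdges f A e) M)
    (hx : x ∈ A) (hxM : ¬ coveredBy M x) : coveredBy M (f (e x).2) := by
  have hadj : (fragmentGraph f A e).Adj x (f (e x).2) :=
    (SimpleGraph.fromRel_adj _ _ _).2 ⟨(hsnd x hx).symm, Or.inl ⟨x, hx, hfst x hx, rfl⟩⟩
  have hsel : s(x, f (e x).2) ∈ selectedEdges f A e := ⟨x, hx, by rw [hfst x hx]⟩
  exact (hM.coveredBy_or_coveredBy hadj hsel).resolve_left hxM

theorem eq_snd_of_mem_markedEdges (hfst : ∀ i ∈ A, f (e i).1 = i) (hsnd : ∀ i ∈ A, f (e i).2 ≠ i)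
    (hM : IsMaximalMatchingIn (fragmentGraph f A e) (selectedEdges f A e) M)
    (hx : ¬ coveredBy M x) (hxy : s(x, y) ∈ markedEdges f A e M) : y = f (e x).2 := by
  obtain hxyM | ⟨k, hk, hkM, hxyk⟩ := hxy
  · exact absurd ⟨_, hxyM, Sym2.mem_mk_left x y⟩ hx
  · rw [hfst k hk, Sym2.eq_iff] at hxyk
    obtain ⟨rfl, rfl⟩ | ⟨rfl, rfl⟩ := hxyk
    · rfl
    · exact absurd (coveredBy_snd_of_not_coveredBy hfst hsnd hM hk hkM) hx

theorem mem_of_mem_markedEdges_of_coveredBy (hfst : ∀ i ∈ A, f (e i).1 = i) (hx : coveredBy M x)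
    (hy : coveredBy M y) (hxy : s(x, y) ∈ markedEdges f A e M) : s(x, y) ∈ M := by
  obtain hxyM | ⟨k, hk, hkM, hxyk⟩ := hxy
  · exact hxyM
  · have hmem : k ∈ s(x, y) := by
      rw [hxyk, hfst k hk]
      exact Sym2.mem_mk_left _ _
    rcases Sym2.mem_iff.1 hmem with rfl | rfl
    · exact absurd hx hkM
    · exact absurd hy hkM

theorem exists_mem_markedEdges (hfst : ∀ i ∈ A, f (e i).1 = i) (hx : x ∈ A) :
    ∃ s ∈ markedEdges f A e M, x ∈ s := by
  by_cases hxM : coveredBy M x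
  · obtain ⟨s, hs, hxs⟩ := hxM
    exact ⟨s, Or.inl hs, hxs⟩
  · refine ⟨s(f (e x).1, f (e x).2), Or.inr ⟨x, hx, hxM, rfl⟩, ?_⟩
    rw [hfst x hx]
    exact Sym2.mem_mk_left _ _

theorem marked_components_diameter_le_three_general (hfst : ∀ i ∈ A, f (e i).1 = i)
    (hsnd : ∀ i ∈ A, f (e i).2 ≠ i)
    (hM : IsMaximalMatchingIn (fragmentGraph f A e) (selectedEdges f A e) M) :
    (∀ u v : ι, (SimpleGraph.fromEdgeSet (markedEdges f A e M)).Reachable u v →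
      (SimpleGraph.fromEdgeSet (markedEdges f A e M)).dist u v ≤ 3) ∧
    ∀ i ∈ A, ∃ s ∈ markedEdges f A e M, i ∈ s := by
  refine ⟨fun u v huv => ?_, fun i hi => exists_mem_markedEdges hfst hi⟩
  obtain ⟨p, hp, hlen⟩ := huv.exists_path_of_dist
  rw [← hlen]
  refine length_le_three_of_isPath (C := {x | coveredBy M x}) ?leaf ?core hp
  case leaf =>
    intro x hx y hy z hz
    exact (eq_snd_of_mem_markedEdges hfst hsnd hM hx hy.1).trans
      (eq_snd_of_mem_markedEdges hfst hsnd hM hx hz.1).symm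
  case core =>
    rintro x hx y ⟨hxy, hy⟩ z ⟨hxz, hz⟩
    exact hM.prop.1.eq_of_mem_of_mem (mem_of_mem_markedEdges_of_coveredBy hfst hx hy hxy.1)
      (mem_of_mem_markedEdges_of_coveredBy hfst hx hz hxz.1)

end MarkedEdges

/-- (a) Every connected component of the spanning subgraph of `H` with edge set `K`
(the marked edges) containing at least one edge has diameter at most `3`, and
(b) every part `F ∈ A` is an endpoint of some edge of `K`. -/
theorem marked_components_diameter_le_three {V ι : Type*} [Fintype V]
    (G : SimpleGraph V) (f : V → ι) (hf : Function.Surjective f)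
    (A : Set ι) (e : ι → V × V)
    (he : ∀ i ∈ A, G.Adj (e i).1 (e i).2 ∧ f (e i).1 = i ∧ f (e i).2 ≠ i)
    (M : Set (Sym2 ι))
    (hM : IsMatchingIn (fragmentGraph f A e) M)
    (hMS : M ⊆ selectedEdges f A e)
    (hmax : ∀ M' : Set (Sym2 ι), IsMatchingIn (fragmentGraph f A e) M' →
      M' ⊆ selectedEdges f A e → M ⊆ M' → M' = M)
    (K : Set (Sym2 ι)) (hK : K = markedEdges f A e M) :
    (∀ C : (SimpleGraph.fromEdgeSet K).ConnectedComponent,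
      (∃ u v : ι, u ∈ C.supp ∧ v ∈ C.supp ∧ (SimpleGraph.fromEdgeSet K).Adj u v) →
      ∀ u ∈ C.supp, ∀ v ∈ C.supp, (SimpleGraph.fromEdgeSet K).dist u v ≤ 3) ∧
    (∀ i ∈ A, ∃ s ∈ K, i ∈ s) := by
  subst hK
  have h := marked_components_diameter_le_three_general (fun i hi => (he i hi).2.1)
    (fun i hi => (he i hi).2.2) ⟨⟨hM, hMS⟩, fun N hN hMN => (hmax N hN.1 hN.2 hMN).le⟩
  exact ⟨fun C _ u hu v hv => h.1 u v (C.reachable_of_mem_supp hu hv), h.2⟩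
end

section
/- Let G be a finite simple graph and P a partition of the vertex set of G in which every part has at least s vertices. Let A be a set of parts of P, and for each F ∈ A let e(F) be an edge of G with exactly one endpoint in F. Let H be the fragment graph, S the set of selected H-edges, M a matching of H contained in S that is maximal among matchings contained in S, and K the marked edge set. Then every connected component of the spanning subgraph of H with edge set K that contains a part of A contains at least two parts, and hence the union of the parts lying in such a component has at least 2s vertices. -/
theorem encard_mul_le_encard_biUnion {α β : Type*} {T : Set β} {g : β → Set α}
    (hg : T.PairwiseDisjoint g) {s : ℕ∞} (hs : ∀ b ∈ T, s ≤ (g b).encard) :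
    T.encard * s ≤ (⋃ b ∈ T, g b).encard := by
  rcases eq_or_ne s 0 with rfl | hs₀
  · simp only [mul_zero, zero_le]
  rcases T.finite_or_infinite with hT | hT
  · induction T, hT using Set.Finite.induction_on with
    | empty => simp only [Set.encard_empty, zero_mul, zero_le]
    | @insert b T hb _ ih =>
      rw [Set.pairwiseDisjoint_insert_of_notMem hb] at hg
      rw [Set.forall_mem_insert] at hs
      rw [Set.biUnion_insert, Set.encard_union_eq (Set.disjoint_iUnion₂_right.mpr hg.2),
        Set.encard_insert_of_notMem hb, add_mul, one_mul, add_comm]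
      exact add_le_add hs.1 (ih hg.1 hs.2)
  · have hne (b : β) (hb : b ∈ T) : g b ≠ ∅ :=
      Set.encard_ne_zero.mp (ne_bot_of_le_ne_bot hs₀ (hs b hb)) |>.ne_empty
    have hinj : T.InjOn g := fun b hb c hc hbc => hg.eq_of_le hb hc (hne b hb) hbc.le
    rw [(hT.biUnion hinj).encard_eq]
    exact le_top

theorem coveredBy.exists_ne_mk_mem {ι : Type*} {M : Set (Sym2 ι)} (hM : M ⊆ Sym2.diagSetᶜ)
    {i : ι} (hi : coveredBy M i) : ∃ j ≠ i, s(i, j) ∈ M := by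
  obtain ⟨t, htM, hit⟩ := hi
  obtain ⟨j, rfl⟩ := Sym2.mem_iff_exists.mp hit
  exact ⟨j, fun hji => hM htM hji.symm, htM⟩

theorem exists_ne_mk_mem_markedEdges {V ι : Type*} {f : V → ι} {A : Set ι} {e : ι → V × V}
    {M : Set (Sym2 ι)} (hM : M ⊆ Sym2.diagSetᶜ) {i : ι} (hi : i ∈ A)
    (he : f (e i).1 = i ∧ f (e i).2 ≠ i) : ∃ j ≠ i, s(i, j) ∈ markedEdges f A e M := by
  by_cases hcov : coveredBy M i
  · obtain ⟨j, hji, hij⟩ := hcov.exists_ne_mk_mem hM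
    exact ⟨j, hji, Or.inl hij⟩
  · exact ⟨f (e i).2, he.2, Or.inr ⟨i, hi, hcov, by rw [he.1]⟩⟩

theorem marked_components_size_general {V ι : Type*} {f : V → ι} {s : ℕ∞}
    (hs : ∀ i, s ≤ (f ⁻¹' {i}).encard) {A : Set ι} {e : ι → V × V}
    (he : ∀ i ∈ A, f (e i).1 = i ∧ f (e i).2 ≠ i) {M : Set (Sym2 ι)} (hM : M ⊆ Sym2.diagSetᶜ)
    (C : (SimpleGraph.fromEdgeSet (markedEdges f A e M)).ConnectedComponent)
    (hC : ∃ i ∈ C.supp, i ∈ A) :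
    C.supp.Nontrivial ∧ 2 * s ≤ (⋃ i ∈ C.supp, f ⁻¹' {i}).encard := by
  obtain ⟨i, hiC, hiA⟩ := hC
  obtain ⟨j, hji, hij⟩ := exists_ne_mk_mem_markedEdges hM hiA (he i hiA)
  have hjC : j ∈ C.supp := C.mem_supp_of_adj_mem_supp hiC
    ((SimpleGraph.fromEdgeSet_adj _).mpr ⟨hij, hji.symm⟩)
  have hnontrivial : C.supp.Nontrivial := ⟨i, hiC, j, hjC, hji.symm⟩
  have htwo : 2 ≤ C.supp.encard := by
    rw [← one_add_one_eq_two, ENat.add_one_le_iff ENat.one_ne_top]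
    exact Set.one_lt_encard_iff_nontrivial.mpr hnontrivial
  refine ⟨hnontrivial, ?_⟩
  calc 2 * s ≤ C.supp.encard * s := by gcongr
    _ ≤ (⋃ i ∈ C.supp, f ⁻¹' {i}).encard :=
      encard_mul_le_encard_biUnion (Set.pairwiseDisjoint_fiber f _) fun i _ => hs i

/-- If every part of the partition has at least `s` vertices, then every connected
component of the spanning subgraph of `H` with edge set `K` (the marked edges) that
contains a part of `A` contains at least two parts, and hence the union of the parts
lying in such a component has at least `2·s` vertices. -/
theorem marked_components_size {V ι : Type*} [Fintype V]
    (G : SimpleGraph V) (f : V → ι) (hf : Function.Surjective f)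
    (s : ℕ) (hs : ∀ i : ι, s ≤ (f ⁻¹' {i}).ncard)
    (A : Set ι) (e : ι → V × V)
    (he : ∀ i ∈ A, G.Adj (e i).1 (e i).2 ∧ f (e i).1 = i ∧ f (e i).2 ≠ i)
    (M : Set (Sym2 ι))
    (hM : IsMatchingIn (fragmentGraph f A e) M)
    (hMS : M ⊆ selectedEdges f A e)
    (hmax : ∀ M' : Set (Sym2 ι), IsMatchingIn (fragmentGraph f A e) M' →
      M' ⊆ selectedEdges f A e → M ⊆ M' → M' = M)
    (K : Set (Sym2 ι)) (hK : K = markedEdges f A e M) :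
    ∀ C : (SimpleGraph.fromEdgeSet K).ConnectedComponent,
      (∃ i ∈ C.supp, i ∈ A) →
      (∃ i ∈ C.supp, ∃ j ∈ C.supp, i ≠ j) ∧
      2 * s ≤ (⋃ i ∈ C.supp, f ⁻¹' {i}).ncard := by
  subst hK
  simp only [← Nat.cast_le (α := ℕ∞), Nat.cast_mul, Nat.cast_ofNat, Set.toFinite,
    Set.Finite.cast_ncard_eq] at hs ⊢
  exact marked_components_size_general hs (fun i hi => (he i hi).2)
    (hM.1.trans (SimpleGraph.edgeSet_subset_compl_diagSet _))
end

section
/- There exists a constant c > 0 such that for every finite connected simple graph G on n ≥ 2 vertices and all integers κ ≥ 1 and W ≥ 1, there exists a finite collection C of vertex subsets of G (called clusters) with the following three properties: (1) every cluster induces a connected subgraph of G whose unweighted diameter is at most c·κ·W; (2) every vertex of G belongs to at most c·κ·n^{1/κ}·log n clusters; (3) for every vertex v of G there is a cluster containing every vertex at distance at most W from v. -/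
/-!
Call two vertices close when their `W`-balls meet. Starting from one vertex of a finite set `U`
with `#U ≤ r ^ κ`, repeatedly pass to the vertices of `U` close to the current set. Among the first
`κ` steps some step multiplies the size by at most `r`; stop there, take the union of the `W`-balls
around the current set `A` as a cluster, and discard the next set `B ⊇ A`. The remaining balls miss
the cluster, so repeating this gives disjoint clusters which together serve at least a fraction
`1 / r` of `U`. With `r = n ^ (1 / κ)`, more than `r * log n` such rounds leave no vertex unserved,
and each round adds at most one to the number of clusters through a vertex.
-/

open Finset

variable {V : Type*} {G : SimpleGraph V}

section InducedMetric

theorem mem_ball_add_one_iff {u v : V} {W : ℕ} : u ∈ G.ball v (W + 1) ↔ G.edist u v ≤ W :=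
  ENat.lt_add_one_iff (ENat.natCast_ne_top W)

theorem connected_and_diam_le_of_radius_le {R : ℕ} (hR : G.radius ≤ R) :
    G.Connected ∧ G.diam ≤ 2 * R := by
  have hediam : G.ediam ≤ (2 * R : ℕ) := by
    push_cast
    exact G.ediam_le_two_mul_radius.trans (by gcongr)
  have : Nonempty V := by
    by_contra hV
    rw [not_nonempty_iff] at hV
    simp [SimpleGraph.radius_eq_top_of_isEmpty] at hR
  exact ⟨SimpleGraph.connected_of_ediam_ne_top (ne_top_of_le_ne_top (ENat.natCast_ne_top _) hediam),
    ENat.toNat_le_of_le_natCast hediam⟩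

theorem edist_induce_le_length {s : Set V} {u v : V} (p : G.Walk u v)
    (hp : ∀ x ∈ p.support, x ∈ s) :
    (G.induce s).edist ⟨u, hp u p.start_mem_support⟩ ⟨v, hp v p.end_mem_support⟩ ≤ p.length := by
  have hlength : (p.induce s hp).length = p.length :=
    (SimpleGraph.Walk.length_map _ _).symm.trans
      (congrArg SimpleGraph.Walk.length (SimpleGraph.Walk.map_induce p hp))
  exact hlength ▸ (p.induce s hp).edist_le

theorem edist_induce_le_of_ball_subset {s : Set V} {c u : V} {r : ℕ∞} (hs : G.ball c r ⊆ s)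
    (hc : c ∈ s) (hu : u ∈ G.ball c r) :
    (G.induce s).edist ⟨c, hc⟩ ⟨u, hs hu⟩ ≤ G.edist c u := by
  classical
  have hlt : G.edist c u < r := by rwa [SimpleGraph.edist_comm]
  obtain ⟨p, hp⟩ := SimpleGraph.exists_walk_of_edist_ne_top hlt.ne_top
  rw [← hp]
  refine edist_induce_le_length p fun x hx => hs ?_
  calc G.edist x c = G.edist c x := SimpleGraph.edist_comm
    _ ≤ (p.takeUntil x hx).length := SimpleGraph.edist_le _
    _ ≤ p.length := by exact_mod_cast p.length_takeUntil_le_length hx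
    _ < r := hp ▸ hlt

theorem edist_induce_mono {s t : Set V} (hst : s ⊆ t) (u v : s) :
    (G.induce t).edist (Set.inclusion hst u) (Set.inclusion hst v) ≤ (G.induce s).edist u v :=
  le_iInf fun p => (p.map (G.induceHomOfLE hst).toHom).edist_le.trans_eq <| by
    rw [SimpleGraph.Walk.length_map]

theorem radius_induce_le_add_two_mul {s t : Set V} {W : ℕ} (hst : s ⊆ t)
    (ht : ∀ x ∈ t, ∃ c, x ∈ G.ball c (W + 1) ∧ G.ball c (W + 1) ⊆ t ∧
      ¬ Disjoint (G.ball c (W + 1)) s) :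
    (G.induce t).radius ≤ (G.induce s).radius + 2 * W := by
  cases isEmpty_or_nonempty s with
  | inl hs => simp [SimpleGraph.radius_eq_top_of_isEmpty]
  | inr hs =>
    obtain ⟨v, hv⟩ := (G.induce s).exists_eccent_eq_radius
    rw [← hv]
    refine SimpleGraph.radius_le_eccent.trans
      ((SimpleGraph.eccent_le_iff (Set.inclusion hst v) _).2 ?_)
    rintro ⟨x, hx⟩
    obtain ⟨c, hxc, hct, hcs⟩ := ht x hx
    obtain ⟨y, hyc, hys⟩ := Set.not_disjoint_iff.1 hcs
    have hc : c ∈ t := hct (SimpleGraph.mem_ball_self (by simp))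
    have edist_center_le {z : V} (hz : z ∈ G.ball c (W + 1)) :
        (G.induce t).edist ⟨c, hc⟩ ⟨z, hct hz⟩ ≤ W :=
      (edist_induce_le_of_ball_subset hct hc hz).trans
        (SimpleGraph.edist_comm.trans_le (mem_ball_add_one_iff.1 hz))
    calc (G.induce t).edist (Set.inclusion hst v) ⟨x, hx⟩
        ≤ (G.induce t).edist (Set.inclusion hst v) ⟨y, hst hys⟩ +
            ((G.induce t).edist ⟨y, hst hys⟩ ⟨c, hc⟩ + (G.induce t).edist ⟨c, hc⟩ ⟨x, hx⟩) :=
          SimpleGraph.edist_triangle.trans (by gcongr; exact SimpleGraph.edist_triangle)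
      _ ≤ (G.induce s).eccent v + (W + W) := by
          gcongr
          · exact (edist_induce_mono hst v ⟨y, hys⟩).trans SimpleGraph.edist_le_eccent
          · exact SimpleGraph.edist_comm.trans_le (edist_center_le hyc)
          · exact edist_center_le hxc
      _ = (G.induce s).eccent v + 2 * W := by rw [two_mul]

end InducedMetric

section Growth

variable {W : ℕ} {U A : Finset V} {v : V}

variable (G W) in
/-- The cluster with set of centers `A`: the union of the balls of radius `W` around the vertices
in `A`. Mathlib's `SimpleGraph.ball` is open, hence the radius `W + 1`. -/
def cluster (A : Finset V) : Set V := ⋃ a ∈ A, G.ball a (W + 1)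

open Classical in
variable (G W) in
/-- The vertices of `U` whose ball of radius `W` meets the cluster with set of centers `A`: one
step of the growth of a set of centers inside `U`. -/
noncomputable def touching (U A : Finset V) : Finset V :=
  {u ∈ U | ¬ Disjoint (G.ball u (W + 1)) (cluster G W A)}

theorem mem_touching :
    v ∈ touching G W U A ↔ v ∈ U ∧ ¬ Disjoint (G.ball v (W + 1)) (cluster G W A) := by
  simp [touching]

theorem ball_subset_cluster (hv : v ∈ A) : G.ball v (W + 1) ⊆ cluster G W A :=
  Set.subset_biUnion_of_mem (u := fun a => G.ball a (W + 1)) hv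

theorem cluster_mono {B : Finset V} (hAB : A ⊆ B) : cluster G W A ⊆ cluster G W B :=
  Set.biUnion_subset_biUnion_left hAB

theorem touching_subset : touching G W U A ⊆ U := fun _ hu => (mem_touching.1 hu).1

theorem subset_touching (hA : A ⊆ U) : A ⊆ touching G W U A := fun a ha =>
  have hball : a ∈ G.ball a (W + 1) := SimpleGraph.mem_ball_self (by simp)
  mem_touching.2 ⟨hA ha, Set.not_disjoint_iff.2 ⟨a, hball, ball_subset_cluster ha hball⟩⟩

theorem disjoint_cluster_cluster_sdiff_touching [DecidableEq V] :
    Disjoint (cluster G W A) (cluster G W (U \ touching G W U A)) := by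
  refine Set.disjoint_iUnion₂_right.2 fun u hu => ?_
  by_contra hmeet
  obtain ⟨huU, hu⟩ := mem_sdiff.1 hu
  exact hu (mem_touching.2 ⟨huU, fun h => hmeet h.symm⟩)

theorem radius_cluster_touching_le (hA : A ⊆ U) :
    (G.induce (cluster G W (touching G W U A))).radius ≤
      (G.induce (cluster G W A)).radius + 2 * W := by
  refine radius_induce_le_add_two_mul (cluster_mono (subset_touching hA)) fun x hx => ?_
  obtain ⟨c, hc, hxc⟩ := Set.mem_iUnion₂.1 hx
  exact ⟨c, hxc, ball_subset_cluster hc, (mem_touching.1 hc).2⟩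

theorem radius_cluster_singleton_le : (G.induce (cluster G W {v})).radius ≤ W := by
  have hball : cluster G W {v} = G.ball v (W + 1) := by simp [cluster]
  have hv : v ∈ G.ball v (W + 1) := SimpleGraph.mem_ball_self (by simp)
  rw [hball]
  refine SimpleGraph.radius_le_eccent.trans ((SimpleGraph.eccent_le_iff ⟨v, hv⟩ _).2 ?_)
  rintro ⟨x, hx⟩
  exact (edist_induce_le_of_ball_subset subset_rfl hv hx).trans
    (SimpleGraph.edist_comm.trans_le (mem_ball_add_one_iff.1 hx))

theorem iterate_touching_subset (hv : v ∈ U) (j : ℕ) : (touching G W U)^[j] {v} ⊆ U := by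
  cases j with
  | zero => simpa using hv
  | succ j => exact Function.iterate_succ_apply' (touching G W U) j {v} ▸ touching_subset

theorem mem_iterate_touching (hv : v ∈ U) (j : ℕ) : v ∈ (touching G W U)^[j] {v} := by
  induction j with
  | zero => exact mem_singleton_self v
  | succ j ih =>
    rw [Function.iterate_succ_apply']
    exact subset_touching (iterate_touching_subset hv j) ih

theorem radius_cluster_iterate_touching_le (hv : v ∈ U) (j : ℕ) :
    (G.induce (cluster G W ((touching G W U)^[j] {v}))).radius ≤ ((2 * j + 1) * W : ℕ) := by
  induction j with
  | zero => simpa using radius_cluster_singleton_le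
  | succ j ih =>
    rw [Function.iterate_succ_apply']
    calc (G.induce (cluster G W (touching G W U ((touching G W U)^[j] {v})))).radius
        ≤ (G.induce (cluster G W ((touching G W U)^[j] {v}))).radius + 2 * W :=
          radius_cluster_touching_le (iterate_touching_subset hv j)
      _ ≤ ((2 * j + 1) * W : ℕ) + 2 * W := by gcongr
      _ = ((2 * (j + 1) + 1) * W : ℕ) := by push_cast; ring

theorem exists_card_touching_le {κ : ℕ} {r : ℝ} (hκ : κ ≠ 0) (hr : 0 ≤ r) (hU : #U ≤ r ^ κ)
    (hv : v ∈ U) :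
    ∃ A ⊆ U, v ∈ A ∧ #(touching G W U A) ≤ r * #A ∧
      (G.induce (cluster G W A)).radius ≤ (2 * κ * W : ℕ) := by
  obtain ⟨j, hj, hgrowth⟩ : ∃ j < κ,
      (#((touching G W U)^[j + 1] {v}) : ℝ) ≤ r * #((touching G W U)^[j] {v}) := by
    by_contra! hgrowth
    have hlt := geom_lt (u := fun j => (#((touching G W U)^[j] {v}) : ℝ)) hr
      (Nat.pos_of_ne_zero hκ) hgrowth
    have hle : (#((touching G W U)^[κ] {v}) : ℝ) ≤ #U := by
      exact_mod_cast card_le_card (iterate_touching_subset hv κ)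
    simp only [Function.iterate_zero, id_eq, card_singleton, Nat.cast_one, mul_one] at hlt
    linarith
  refine ⟨_, iterate_touching_subset hv j, mem_iterate_touching hv j, ?_,
    (radius_cluster_iterate_touching_le hv j).trans ?_⟩
  · rwa [← Function.iterate_succ_apply' (touching G W U)]
  · gcongr
    omega

end Growth

/-- `C` is a neighborhood cover of the vertices in `U`: every cluster in `C` has radius at most `R`
as an induced subgraph, and every ball of radius `W` centered in `U` lies in a cluster. The radius
of an empty or disconnected graph is `⊤`, so the clusters are connected. -/
structure IsNeighborhoodCover (G : SimpleGraph V) (W R : ℕ) (U : Set V) (C : Finset (Set V)) :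
    Prop where
  radius_le : ∀ s ∈ C, (G.induce s).radius ≤ R
  exists_ball_subset : ∀ v ∈ U, ∃ s ∈ C, G.ball v (W + 1) ⊆ s

namespace IsNeighborhoodCover

variable {W R : ℕ} {U U' : Set V} {C C' : Finset (Set V)}

theorem empty : IsNeighborhoodCover G W R ∅ ∅ := ⟨by simp, by simp⟩

theorem union [DecidableEq (Set V)] (hC : IsNeighborhoodCover G W R U C)
    (hC' : IsNeighborhoodCover G W R U' C') :
    IsNeighborhoodCover G W R (U ∪ U') (C ∪ C') where
  radius_le s hs := (mem_union.1 hs).elim (hC.radius_le s) (hC'.radius_le s)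
  exists_ball_subset v hv := by
    rcases hv with hv | hv
    · obtain ⟨s, hs, hball⟩ := hC.exists_ball_subset v hv
      exact ⟨s, mem_union_left C' hs, hball⟩
    · obtain ⟨s, hs, hball⟩ := hC'.exists_ball_subset v hv
      exact ⟨s, mem_union_right C hs, hball⟩

theorem singleton_cluster {A : Finset V} (hA : (G.induce (cluster G W A)).radius ≤ R) :
    IsNeighborhoodCover G W R A {cluster G W A} :=
  ⟨by simpa using hA, fun _ hv => ⟨_, mem_singleton_self _, ball_subset_cluster hv⟩⟩

end IsNeighborhoodCover

section Rounds

variable {W κ : ℕ} {r : ℝ}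

theorem exists_pairwiseDisjoint_cover (hκ : κ ≠ 0) (hr : 0 ≤ r) (U : Finset V)
    (hU : #U ≤ r ^ κ) :
    ∃ (C : Finset (Set V)) (D : Finset V), D ⊆ U ∧ IsNeighborhoodCover G W (2 * κ * W) D C ∧
      (C : Set (Set V)).PairwiseDisjoint id ∧ (∀ s ∈ C, s ⊆ cluster G W U) ∧ #U ≤ r * #D := by
  classical
  induction U using Finset.strongInduction with
  | H U ih =>
    obtain rfl | ⟨v, hv⟩ := U.eq_empty_or_nonempty
    · exact ⟨∅, ∅, by simpa using IsNeighborhoodCover.empty⟩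
    obtain ⟨A, hAU, hvA, hgrowth, hradius⟩ :=
      exists_card_touching_le (G := G) (W := W) hκ hr hU hv
    set B := touching G W U A
    have hAB : A ⊆ B := subset_touching hAU
    have hcard : (#(U \ B) : ℝ) + #B = #U := by
      exact_mod_cast card_sdiff_add_card_eq_card touching_subset
    obtain ⟨C, D, hD, hC, hdisj, hsub, hDcard⟩ :=
      ih (U \ B) (sdiff_ssubset touching_subset ⟨v, hAB hvA⟩)
        (le_trans (by exact_mod_cast card_le_card sdiff_subset) hU)
    refine ⟨{cluster G W A} ∪ C, A ∪ D, union_subset hAU (hD.trans sdiff_subset), ?_, ?_, ?_, ?_⟩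
    · exact_mod_cast (IsNeighborhoodCover.singleton_cluster hradius).union hC
    · rw [singleton_union, coe_insert]
      exact hdisj.insert fun s hs _ =>
        disjoint_cluster_cluster_sdiff_touching.mono_right (hsub s hs)
    · simp only [singleton_union, forall_mem_insert]
      exact ⟨cluster_mono hAU, fun s hs => (hsub s hs).trans (cluster_mono sdiff_subset)⟩
    · have hAD : Disjoint A D := disjoint_of_subset_left hAB
        (disjoint_of_subset_right hD disjoint_sdiff)
      rw [card_union_of_disjoint hAD]
      push_cast
      linarith

theorem card_filter_mem_le_one {α : Type*} {C : Finset (Set α)}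
    (hC : (C : Set (Set α)).PairwiseDisjoint id) (a : α) [DecidablePred (a ∈ · : Set α → Prop)] :
    #{s ∈ C | a ∈ s} ≤ 1 := by
  refine card_le_one.2 fun s hs t ht => ?_
  rw [mem_filter] at hs ht
  exact hC.elim_set hs.1 ht.1 a hs.2 ht.2

theorem card_sdiff_le_exp_mul {α : Type*} [DecidableEq α] {U D : Finset α} (hr : 0 < r) (hD : D ⊆ U)
    (hU : #U ≤ r * #D) : (#(U \ D) : ℝ) ≤ Real.exp (-1 / r) * #U := by
  have hcard : (#(U \ D) : ℝ) + #D = #U := by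
    exact_mod_cast card_sdiff_add_card_eq_card hD
  have hDcard : (#U : ℝ) / r ≤ #D := (div_le_iff₀' hr).2 hU
  calc (#(U \ D) : ℝ) ≤ (-1 / r + 1) * #U := by
        rw [add_mul, one_mul, neg_div, neg_mul, one_div_mul_eq_div]
        linarith
    _ ≤ Real.exp (-1 / r) * #U := by
        gcongr
        exact Real.add_one_le_exp _

open Classical in
theorem exists_cover_card_uncovered_le (hκ : κ ≠ 0) (hr : 0 < r) (t : ℕ) (U : Finset V)
    (hU : #U ≤ r ^ κ) :
    ∃ (C : Finset (Set V)) (D : Finset V), D ⊆ U ∧ IsNeighborhoodCover G W (2 * κ * W) D C ∧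
      (∀ v, #{s ∈ C | v ∈ s} ≤ t) ∧ #(U \ D) ≤ Real.exp (-t / r) * #U := by
  induction t generalizing U with
  | zero => exact ⟨∅, ∅, by simpa using IsNeighborhoodCover.empty⟩
  | succ t ih =>
    obtain ⟨C₁, D₁, hD₁, hC₁, hdisj, -, hcard₁⟩ :=
      exists_pairwiseDisjoint_cover (G := G) (W := W) hκ hr.le U hU
    obtain ⟨C₂, D₂, hD₂, hC₂, hoverlap, hcard₂⟩ :=
      ih (U \ D₁) (le_trans (by exact_mod_cast card_le_card sdiff_subset) hU)
    refine ⟨C₁ ∪ C₂, D₁ ∪ D₂, union_subset hD₁ (hD₂.trans sdiff_subset),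
      by exact_mod_cast hC₁.union hC₂, fun v => ?_, ?_⟩
    · rw [filter_union, add_comm t]
      exact (card_union_le _ _).trans
        (Nat.add_le_add (card_filter_mem_le_one hdisj v) (hoverlap v))
    · rw [← sup_eq_union, ← sdiff_sdiff_left]
      calc (#((U \ D₁) \ D₂) : ℝ) ≤ Real.exp (-t / r) * #(U \ D₁) := hcard₂
        _ ≤ Real.exp (-t / r) * (Real.exp (-1 / r) * #U) := by
            gcongr
            exact card_sdiff_le_exp_mul hr hD₁ hcard₁
        _ = Real.exp (-(t + 1 : ℕ) / r) * #U := by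
            rw [← mul_assoc, ← Real.exp_add]
            push_cast
            ring_nf

open Classical in
theorem exists_cover_overlap_le (hκ : κ ≠ 0) (hr : 0 < r) {U : Finset V} (hU : #U ≤ r ^ κ)
    {t : ℕ} (ht : r * Real.log #U < t) :
    ∃ C : Finset (Set V), IsNeighborhoodCover G W (2 * κ * W) U C ∧
      ∀ v, #{s ∈ C | v ∈ s} ≤ t := by
  obtain ⟨C, D, hD, hC, hoverlap, hcard⟩ :=
    exists_cover_card_uncovered_le (G := G) (W := W) hκ hr t U hU
  have hfew : Real.exp (-t / r) * #U < 1 := by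
    rcases U.eq_empty_or_nonempty with rfl | hne
    · simp
    · have hlog : Real.log #U < t / r := (lt_div_iff₀' hr).2 ht
      rw [← Real.exp_log (Nat.cast_pos.2 hne.card_pos), ← Real.exp_add, Real.exp_lt_one_iff,
        neg_div]
      linarith
  have hUD : #(U \ D) = 0 := Nat.lt_one_iff.1 (by exact_mod_cast hcard.trans_lt hfew)
  have hDU : D = U := hD.antisymm (sdiff_eq_empty_iff_subset.1 (card_eq_zero.1 hUD))
  exact ⟨C, hDU ▸ hC, hoverlap⟩

end Rounds

theorem rpow_mul_log_add_one_le {n κ : ℕ} (hn : 2 ≤ n) (hκ : 1 ≤ κ) :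
    (n : ℝ) ^ (1 / (κ : ℝ)) * Real.log n + 1 ≤
      4 * κ * (n : ℝ) ^ (1 / (κ : ℝ)) * Real.log n := by
  have hn' : (2 : ℝ) ≤ n := by exact_mod_cast hn
  have hκ' : (1 : ℝ) ≤ κ := by exact_mod_cast hκ
  have hroot : 1 ≤ (n : ℝ) ^ (1 / (κ : ℝ)) := Real.one_le_rpow (by linarith) (by positivity)
  have hlog : 1 / 2 ≤ Real.log n :=
    (by linarith [Real.log_two_gt_d9] : 1 / 2 ≤ Real.log 2).trans
      (Real.log_le_log two_pos hn')
  set x := (n : ℝ) ^ (1 / (κ : ℝ)) * Real.log n with hx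
  have hhalf : 1 / 2 ≤ x := hlog.trans (le_mul_of_one_le_left (by linarith) hroot)
  calc x + 1 ≤ 4 * x := by linarith
    _ ≤ 4 * (κ * x) := by
        gcongr
        exact le_mul_of_one_le_left (by linarith) hκ'
    _ = 4 * κ * (n : ℝ) ^ (1 / (κ : ℝ)) * Real.log n := by rw [hx]; ring

open Classical in
theorem sparse_neighborhood_cover_exists_general :
    ∃ c : ℝ, 0 < c ∧
      ∀ {V : Type*} (G : SimpleGraph V) (κ W : ℕ) (U : Finset V), 2 ≤ #U → 1 ≤ κ →
        ∃ C : Finset (Set V),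
          (∀ s ∈ C, (G.induce s).Connected ∧ ((G.induce s).diam : ℝ) ≤ c * κ * W) ∧
          (∀ v, (#{s ∈ C | v ∈ s} : ℝ) ≤
            c * κ * (#U : ℝ) ^ (1 / (κ : ℝ)) * Real.log #U) ∧
          ∀ v ∈ U, ∃ s ∈ C, ∀ u, G.edist u v ≤ W → u ∈ s := by
  refine ⟨4, by norm_num, fun {V} G κ W U hU hκ => ?_⟩
  set r : ℝ := (#U : ℝ) ^ (1 / (κ : ℝ)) with hr
  have hκ₀ : κ ≠ 0 := Nat.one_le_iff_ne_zero.1 hκ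
  have hr₀ : 0 < r := by positivity
  have hrκ : r ^ κ = #U := by
    rw [hr, one_div]
    exact Real.rpow_inv_natCast_pow (Nat.cast_nonneg _) hκ₀
  obtain ⟨C, hC, hoverlap⟩ := exists_cover_overlap_le (G := G) (W := W) hκ₀ hr₀ hrκ.ge
    (t := ⌊r * Real.log #U⌋₊ + 1) (by exact_mod_cast Nat.lt_floor_add_one _)
  refine ⟨C, fun s hs => ?_, fun v => ?_, fun v hv => ?_⟩
  · obtain ⟨hconn, hdiam⟩ := connected_and_diam_le_of_radius_le (hC.radius_le s hs)
    refine ⟨hconn, ?_⟩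
    calc ((G.induce s).diam : ℝ) ≤ (2 * (2 * κ * W) : ℕ) := by exact_mod_cast hdiam
      _ = 4 * κ * W := by push_cast; ring
  · calc (#{s ∈ C | v ∈ s} : ℝ) ≤ ⌊r * Real.log #U⌋₊ + 1 := by exact_mod_cast hoverlap v
      _ ≤ r * Real.log #U + 1 := by
          gcongr
          exact Nat.floor_le (mul_nonneg hr₀.le (Real.log_natCast_nonneg _))
      _ ≤ 4 * κ * r * Real.log #U := rpow_mul_log_add_one_le hU hκ
  · obtain ⟨s, hs, hball⟩ := hC.exists_ball_subset v hv
    exact ⟨s, hs, fun u hu => hball (mem_ball_add_one_iff.2 hu)⟩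

open Classical in
/-- There is a constant `c > 0` such that every finite connected simple graph `G` on
`n ≥ 2` vertices admits, for all integers `κ, W ≥ 1`, a sparse `(κ, W)`-neighborhood
cover: a finite collection `C` of vertex subsets (clusters) such that
(1) every cluster induces a connected subgraph of `G` of unweighted diameter at most
`c·κ·W` (depth property);
(2) every vertex belongs to at most `c·κ·n^{1/κ}·log n` clusters (sparsity property);
(3) for every vertex `v` some cluster contains the whole ball of radius `W` around `v`
(neighborhood property). -/
theorem sparse_neighborhood_cover_exists :
    ∃ c : ℝ, 0 < c ∧
      ∀ (V : Type) [Fintype V] (G : SimpleGraph V) (κ W : ℕ),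
        G.Connected → 2 ≤ Fintype.card V → 1 ≤ κ → 1 ≤ W →
        ∃ C : Finset (Set V),
          (∀ s ∈ C, (G.induce s).Connected ∧
            ((G.induce s).diam : ℝ) ≤ c * κ * W) ∧
          (∀ v : V, ((C.filter (fun s => v ∈ s)).card : ℝ) ≤
            c * κ * (Fintype.card V : ℝ) ^ (1 / (κ : ℝ)) * Real.log (Fintype.card V)) ∧
          (∀ v : V, ∃ s ∈ C, ∀ u : V, G.dist u v ≤ W → u ∈ s) := by
  obtain ⟨c, hc, hcover⟩ := sparse_neighborhood_cover_exists_general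
  refine ⟨c, hc, fun V _ G κ W hG hn hκ _ => ?_⟩
  simpa [← (hG _ _).coe_dist_eq_edist] using hcover G κ W Finset.univ hn hκ
end

section
/- Let G be a finite connected simple graph with an injective real-valued edge-weight function, and let P be a partition of the vertex set of G into k ≥ 2 parts, each inducing a connected subgraph of G. Then every part F has a lightest outgoing edge loe(F), and the following hold: (a) for every part F, the edge loe(F) belongs to the unique minimum spanning tree of G; (b) merging the parts along these edges — i.e., taking the partition whose parts are the unions of the parts in each connected component of the simple graph on P in which two distinct parts are adjacent if and only if some loe(F) joins them — yields a partition with at most ⌊k/2⌋ parts. -/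
/-!
If `ab` is an edge of `G` and `e` lies on the path from `a` to `b` in a minimum spanning tree `T`,
then exchanging `e` for `ab` in `T` gives another spanning tree, so `w e ≤ w ab`. When `ab` is a
lightest outgoing edge of `F`, the path from `a` to `b` leaves `F` through some edge `e`, and
`w ab ≤ w e` as well; injectivity of `w` then forces `ab = e ∈ T`.

Following its lightest outgoing edge, each part is merged with at least one other, so every
connected component of the graph on the parts has at least two elements.
-/

section

open SimpleGraph

variable {V : Type*}

/-- `T` is a minimum spanning tree of `G` with respect to the edge weights `w`: a spanning tree of
`G` whose total weight is least among all spanning trees of `G`. -/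
def IsMinSpanningTree (G : SimpleGraph V) (w : Sym2 V → ℝ) (T : SimpleGraph V) : Prop :=
  T ≤ G ∧ T.IsTree ∧ ∀ T' : SimpleGraph V, T' ≤ G → T'.IsTree → mstWeight w T ≤ mstWeight w T'

/-- `e` is a lightest outgoing edge of the vertex set `F`: an edge of `G` leaving `F`, of least
weight among all such edges. It is encoded as an ordered pair, whose first entry is the endpoint
in `F`. -/
def IsLightestOutgoingEdge {α : Type*} [LE α] (G : SimpleGraph V) (w : Sym2 V → α) (F : Set V)
    (e : V × V) : Prop :=
  G.Adj e.1 e.2 ∧ e.1 ∈ F ∧ e.2 ∉ F ∧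
    ∀ u v : V, G.Adj u v → u ∈ F → v ∉ F → w s(e.1, e.2) ≤ w s(u, v)

/-- The graph on the parts of a partition (the fibers of `f`) along which the parts are merged:
distinct parts are adjacent iff one of the chosen edges `loe i` joins them. -/
def mergeGraph {ι : Type*} (f : V → ι) (loe : ι → V × V) : SimpleGraph ι :=
  fromRel fun i j => ∃ k, f (loe k).1 = i ∧ f (loe k).2 = j

variable {G T : SimpleGraph V} {a b : V} {e : Sym2 V}

theorem exists_isLightestOutgoingEdge {α : Type*} [LinearOrder α] [Finite V]
    (hG : G.Preconnected) (w : Sym2 V → α) {F : Set V} (hF : F.Nonempty) (hF' : Fᶜ.Nonempty) :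
    ∃ e, IsLightestOutgoingEdge G w F e := by
  obtain ⟨a, ha⟩ := hF
  obtain ⟨b, hb⟩ := hF'
  obtain ⟨p⟩ := hG a b
  obtain ⟨d, -, hd₁, hd₂⟩ := p.exists_boundary_dart F ha hb
  obtain ⟨e, ⟨hadj, he₁, he₂⟩, hmin⟩ := Set.exists_min_image
    {e : V × V | G.Adj e.1 e.2 ∧ e.1 ∈ F ∧ e.2 ∉ F} (fun e => w s(e.1, e.2))
    (Set.toFinite _) ⟨d.toProd, d.adj, hd₁, hd₂⟩
  exact ⟨e, hadj, he₁, he₂, fun u v huv hu hv => hmin (u, v) ⟨huv, hu, hv⟩⟩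

theorem not_reachable_deleteEdges_of_mem_edges (hT : T.IsAcyclic) {p : T.Walk a b}
    (hp : p.IsPath) (he : e ∈ p.edges) : ¬(T.deleteEdges {e}).Reachable a b := by
  classical
  intro h
  obtain ⟨x, y⟩ := e
  obtain ⟨q, hq⟩ := reachable_deleteEdges_iff_exists_walk.1 h
  have hpq : ⟨p, hp⟩ = q.toPath := (hT.subsingleton_path a b).elim _ _
  have hedges : p.edges = q.bypass.edges := congrArg (fun r : T.Path a b => r.1.edges) hpq
  exact hq (q.edges_bypass_subset_edges (hedges ▸ he))

theorem isTree_deleteEdges_sup_edge (hT : T.IsTree) (hne : e ≠ s(a, b))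
    (hab : ¬(T.deleteEdges {e}).Reachable a b) : (T.deleteEdges {e} ⊔ edge a b).IsTree := by
  obtain ⟨x, y⟩ := e
  have := hT.nonempty
  have hacyclic : (T.deleteEdges {s(x, y)} ⊔ edge a b).IsAcyclic :=
    (hT.isAcyclic.anti (deleteEdges_le _)).sup_edge_of_not_reachable hab
  have hdelete : (T ⊔ edge a b).deleteEdges {s(x, y)} = T.deleteEdges {s(x, y)} ⊔ edge a b := by
    have hdisj : Disjoint (edge a b).edgeSet {s(x, y)} :=
      Set.disjoint_singleton_right.2 fun h => hne (edgeSet_edge_subset h)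
    rw [deleteEdges_sup, deleteEdges_eq_self.2 hdisj]
  refine ⟨hdelete ▸ (hT.connected.mono le_sup_left).connected_delete_edge_of_not_isBridge ?_,
    hacyclic⟩
  -- If `xy` were a bridge of `T ⊔ ab`, that graph would be acyclic, but the tree `T` is maximal
  -- among acyclic graphs.
  intro hbridge
  rw [isBridge_iff, hdelete] at hbridge
  have hle : T ≤ T.deleteEdges {s(x, y)} ⊔ edge a b ⊔ edge x y :=
    le_sdiff_sup.trans (sup_le_sup_right le_sup_left _)
  have hge : T.deleteEdges {s(x, y)} ⊔ edge a b ⊔ edge x y ≤ T :=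
    (maximal_isAcyclic_iff_isTree.2 hT).le_of_ge (hacyclic.sup_edge_of_not_reachable hbridge) hle
  have hedge : edge a b ≤ T := le_sup_right.trans (le_sup_left.trans hge)
  obtain rfl | hadj := (edge_le_iff T).1 hedge
  · exact hab .rfl
  · exact hab (Adj.reachable (deleteEdges_adj.2 ⟨hadj, hne.symm⟩))

theorem mstWeight_deleteEdges_add (w : Sym2 V → ℝ) (hT : T.edgeSet.Finite)
    (he : e ∈ T.edgeSet) : mstWeight w (T.deleteEdges {e}) + w e = mstWeight w T := by
  rw [mstWeight, mstWeight, edgeSet_deleteEdges, add_comm,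
    ← finsum_mem_insert w (by simp) hT.sdiff, Set.insert_sdiff_singleton, Set.insert_eq_of_mem he]

theorem mstWeight_sup_edge (w : Sym2 V → ℝ) (hT : T.edgeSet.Finite) (hne : a ≠ b)
    (hab : ¬T.Adj a b) : mstWeight w (T ⊔ edge a b) = mstWeight w T + w s(a, b) := by
  rw [mstWeight, mstWeight, edgeSet_sup, edgeSet_edge_of_ne hne, Set.union_singleton,
    finsum_mem_insert w (by simpa) hT, add_comm]

namespace IsMinSpanningTree

variable [Finite V] {w : Sym2 V → ℝ}

theorem weight_le_of_mem_edges (hT : IsMinSpanningTree G w T) (hab : G.Adj a b) {p : T.Walk a b}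
    (hp : p.IsPath) (he : e ∈ p.edges) : w e ≤ w s(a, b) := by
  obtain ⟨hTG, htree, hmin⟩ := hT
  obtain rfl | hne := eq_or_ne e s(a, b)
  · rfl
  have hsep : ¬(T.deleteEdges {e}).Reachable a b :=
    not_reachable_deleteEdges_of_mem_edges htree.isAcyclic hp he
  have hle : T.deleteEdges {e} ⊔ edge a b ≤ G :=
    sup_le ((deleteEdges_le _).trans hTG) ((edge_le_iff G).2 (.inr hab))
  have hexchange := hmin _ hle (isTree_deleteEdges_sup_edge htree hne hsep)
  rw [mstWeight_sup_edge w (Set.toFinite _) hab.ne fun h => hsep h.reachable,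
    ← mstWeight_deleteEdges_add w (Set.toFinite _) (p.edges_subset_edgeSet he)] at hexchange
  exact le_of_add_le_add_left hexchange

theorem mem_edgeSet_of_isLightestOutgoingEdge (hT : IsMinSpanningTree G w T)
    (hw : Set.InjOn w G.edgeSet) {F : Set V} {e : V × V} (he : IsLightestOutgoingEdge G w F e) :
    s(e.1, e.2) ∈ T.edgeSet := by
  obtain ⟨hadj, he₁, he₂, hmin⟩ := he
  obtain ⟨p, hp⟩ := (hT.2.1.connected e.1 e.2).exists_isPath
  obtain ⟨d, hd, hd₁, hd₂⟩ := p.exists_boundary_dart F he₁ he₂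
  have hdG : G.Adj d.fst d.snd := hT.1 d.adj
  have hle : w s(d.fst, d.snd) ≤ w s(e.1, e.2) :=
    hT.weight_le_of_mem_edges hadj hp (List.mem_map_of_mem hd)
  have heq : s(e.1, e.2) = s(d.fst, d.snd) :=
    hw hadj hdG ((hmin _ _ hdG hd₁ hd₂).antisymm hle)
  exact heq ▸ d.adj

end IsMinSpanningTree

theorem two_mul_card_connectedComponent_le [Finite V] (hG : ∀ v, ¬G.IsIsolated v) :
    2 * Nat.card G.ConnectedComponent ≤ Nat.card V := by
  classical
  have := Fintype.ofFinite V
  have hfiber (c : G.ConnectedComponent) :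
      2 ≤ (Finset.univ.filter fun v => G.connectedComponentMk v = c).card := by
    induction c using ConnectedComponent.ind with | h v =>
    obtain ⟨u, hvu⟩ := exists_adj_iff_not_isIsolated.2 (hG v)
    exact Finset.one_lt_card.2 ⟨v, by simp, u, by simpa using hvu.symm.reachable, hvu.ne⟩
  simpa using Finset.mul_card_image_le_card_of_maps_to (s := Finset.univ) (t := Finset.univ)
    (fun v _ => Finset.mem_univ (G.connectedComponentMk v)) 2 fun c _ => hfiber c

section Merging

variable {ι : Type*} {f : V → ι} {loe : ι → V × V}

theorem mergeGraph_adj {i : ι} (hfst : f (loe i).1 = i) (hsnd : f (loe i).2 ≠ i) :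
    (mergeGraph f loe).Adj i (f (loe i).2) :=
  ⟨hsnd.symm, .inl ⟨i, hfst, rfl⟩⟩

theorem card_connectedComponent_mergeGraph_le [Finite ι] (hfst : ∀ i, f (loe i).1 = i)
    (hsnd : ∀ i, f (loe i).2 ≠ i) :
    Nat.card (mergeGraph f loe).ConnectedComponent ≤ Nat.card ι / 2 := by
  have := two_mul_card_connectedComponent_le fun i =>
    (mergeGraph_adj (hfst i) (hsnd i)).not_isIsolated_left
  omega

theorem loe_merging_general [Finite V] [Nontrivial ι] (hG : G.Connected) {w : Sym2 V → ℝ}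
    (hw : Set.InjOn w G.edgeSet) (hf : Function.Surjective f) :
    ∃ loe : ι → V × V,
      (∀ i, IsLightestOutgoingEdge G w (f ⁻¹' {i}) (loe i)) ∧
      (∀ T, IsMinSpanningTree G w T → ∀ i, s((loe i).1, (loe i).2) ∈ T.edgeSet) ∧
      Nat.card (mergeGraph f loe).ConnectedComponent ≤ Nat.card ι / 2 := by
  have := Finite.of_surjective f hf
  have hexists (i : ι) : ∃ e, IsLightestOutgoingEdge G w (f ⁻¹' {i}) e :=
    exists_isLightestOutgoingEdge hG.preconnected w ((Set.singleton_nonempty i).preimage hf)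
      ((Set.nonempty_compl_of_nontrivial i).preimage hf)
  choose loe hloe using hexists
  exact ⟨loe, hloe, fun T hT i => hT.mem_edgeSet_of_isLightestOutgoingEdge hw (hloe i),
    card_connectedComponent_mergeGraph_le (fun i => (hloe i).2.1) fun i => (hloe i).2.2.1⟩

end Merging

end

/-- Let `G` be a finite connected simple graph with injective real edge weights, and let a
partition of its vertex set into `k ≥ 2` parts (the fibers of a surjection `f : V → ι`),
each inducing a connected subgraph of `G`, be given. Then every part has a lightest
outgoing edge `loe i`, and moreover:
(a) each `loe i` belongs to the (unique) minimum spanning tree of `G`;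
(b) merging the parts along these edges — taking the partition whose parts are the unions
of the parts in each connected component of the graph on `ι` in which distinct parts are
adjacent iff some `loe` joins them — yields at most `⌊k/2⌋` parts. -/
theorem loe_merging {V ι : Type*} [Fintype V] [Fintype ι]
    (G : SimpleGraph V) (hG : G.Connected)
    (w : Sym2 V → ℝ) (hw : Set.InjOn w G.edgeSet)
    (f : V → ι) (hf : Function.Surjective f)
    (k : ℕ) (hk : Fintype.card ι = k) (hk2 : 2 ≤ k)
    (hconn : ∀ i : ι, (G.induce (f ⁻¹' {i})).Connected) :
    ∃ loe : ι → V × V,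
      (∀ i : ι, G.Adj (loe i).1 (loe i).2 ∧ f (loe i).1 = i ∧ f (loe i).2 ≠ i ∧
        ∀ u v : V, G.Adj u v → f u = i → f v ≠ i →
          w s((loe i).1, (loe i).2) ≤ w s(u, v)) ∧
      (∀ T : SimpleGraph V, T ≤ G → T.IsTree →
        (∀ T' : SimpleGraph V, T' ≤ G → T'.IsTree → mstWeight w T ≤ mstWeight w T') →
        ∀ i : ι, s((loe i).1, (loe i).2) ∈ T.edgeSet) ∧
      Nat.card (SimpleGraph.fromRel
          (fun i j : ι => ∃ k' : ι, f (loe k').1 = i ∧ f (loe k').2 = j)).ConnectedComponent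
        ≤ k / 2 := by
  have : Nontrivial ι := Fintype.one_lt_card_iff_nontrivial.1 (hk ▸ hk2)
  obtain ⟨loe, hloe, hmst, hcard⟩ := loe_merging_general hG hw hf
  exact ⟨loe, hloe, fun T hTG hT hmin => hmst T ⟨hTG, hT, hmin⟩,
    hk ▸ Nat.card_eq_fintype_card (α := ι) ▸ hcard⟩
end

section
/- Let G be a finite connected simple graph with an injective real-valued edge-weight function, let T be its unique minimum spanning tree, and let P be a partition of the vertex set of G into k ≥ 2 parts, each inducing a connected subgraph of T. Merge the parts along their lightest outgoing edges, i.e., take the partition whose parts are the unions of the parts in each connected component of the simple graph on P in which two distinct parts are adjacent if and only if the lightest outgoing edge of some part joins them. Then every part of the merged partition again induces a connected subgraph of T. -/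
/-!
If removing an edge `e` of a spanning tree `T` separates `a` from `b`, then replacing `e` by
`s(a, b)` gives another spanning tree, so minimality of `T` forces `w e ≤ w s(a, b)`. The path of
`T` between the endpoints of the lightest outgoing edge of a set `S` has to leave `S` through some
edge, which is therefore at most as heavy as the lightest one; by injectivity it *is* the lightest
one. Hence every lightest outgoing edge lies in `T`, and a walk in the graph on the parts can be
followed in `T` by passing through each part and along these edges.
-/

section Graph

open SimpleGraph

variable {V ι : Type*} {G : SimpleGraph V}

lemma reachable_deleteEdges_or_of_reachable {u v x : V} (h : G.Reachable x u) :
    (G.deleteEdges {s(u, v)}).Reachable x u ∨ (G.deleteEdges {s(u, v)}).Reachable x v := by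
  obtain ⟨p⟩ := h
  induction p with
  | nil => exact .inl .rfl
  | @cons x y u hxy p ih =>
    by_cases he : s(x, y) = s(u, v)
    · obtain ⟨rfl, -⟩ | ⟨rfl, -⟩ := Sym2.eq_iff.mp he
      exacts [.inl .rfl, .inr .rfl]
    · have hxy' : (G.deleteEdges {s(u, v)}).Reachable x y :=
        (deleteEdges_adj.mpr ⟨hxy, he⟩).reachable
      exact ih.imp hxy'.trans hxy'.trans

lemma connected_deleteEdges_sup_edge (hG : G.Preconnected) {a b : V} {e : Sym2 V}
    (hab : ¬ (G.deleteEdges {e}).Reachable a b) :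
    (G.deleteEdges {e} ⊔ edge a b).Connected := by
  induction e with | h u v
  set H := G.deleteEdges {s(u, v)}
  have hside (x : V) : H.Reachable x u ∨ H.Reachable x v :=
    reachable_deleteEdges_or_of_reachable (hG x u)
  have hmono {x y : V} (h : H.Reachable x y) : (H ⊔ edge a b).Reachable x y := h.mono le_sup_left
  have hab_new : (H ⊔ edge a b).Reachable a b := by
    have hne : a ≠ b := by rintro rfl; exact hab .rfl
    exact Adj.reachable (.inr (edge_adj a b a b |>.mpr ⟨.inl ⟨rfl, rfl⟩, hne⟩))
  have huv : (H ⊔ edge a b).Reachable u v := by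
    obtain ha | ha := hside a <;> obtain hb | hb := hside b
    · exact absurd (ha.trans hb.symm) hab
    · exact (hmono ha).symm.trans (hab_new.trans (hmono hb))
    · exact (hmono hb).symm.trans (hab_new.symm.trans (hmono ha))
    · exact absurd (ha.trans hb.symm) hab
  refine (connected_iff_exists_forall_reachable _).mpr ⟨u, fun x ↦ ?_⟩
  exact (hside x).elim (fun h ↦ (hmono h).symm) (fun h ↦ huv.trans (hmono h).symm)

lemma isTree_deleteEdges_sup_edge_s11 (hG : G.IsTree) {a b : V} {e : Sym2 V}
    (hab : ¬ (G.deleteEdges {e}).Reachable a b) :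
    (G.deleteEdges {e} ⊔ edge a b).IsTree where
  connected := connected_deleteEdges_sup_edge hG.connected.preconnected hab
  isAcyclic := (hG.isAcyclic.anti (deleteEdges_le _)).sup_edge_of_not_reachable hab

lemma not_reachable_deleteEdges_of_mem_edges_s11 (hG : G.IsAcyclic) {a b : V} {p : G.Walk a b}
    (hp : p.IsPath) {e : Sym2 V} (he : e ∈ p.edges) :
    ¬ (G.deleteEdges {e}).Reachable a b := by
  intro h
  obtain ⟨q, hq⟩ := h.exists_isPath
  have hle : G.deleteEdges {e} ≤ G := deleteEdges_le _
  have hpq : p = q.mapLe hle :=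
    congrArg Subtype.val <|
      (hG.subsingleton_path a b).elim ⟨p, hp⟩ ⟨q.mapLe hle, hq.mapLe hle⟩
  rw [hpq, Walk.edges_mapLe_eq_edges] at he
  have he' := q.edges_subset_edgeSet he
  rw [edgeSet_deleteEdges] at he'
  exact he'.2 rfl

variable {R : SimpleGraph ι} {A : ι → Set V}

lemma connected_induce_biUnion_support (hA : ∀ i, (G.induce (A i)).Connected)
    (hR : ∀ i j, R.Adj i j → ∃ a ∈ A i, ∃ b ∈ A j, G.Adj a b) {i j : ι} (p : R.Walk i j) :
    (G.induce (⋃ k ∈ p.support, A k)).Connected := by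
  induction p with
  | @nil i =>
    have hsingleton : ⋃ k ∈ (Walk.nil : R.Walk i i).support, A k = A i := by simp
    rw [hsingleton]
    exact hA i
  | @cons i j _ hij p ih =>
    obtain ⟨a, ha, b, hb, hab⟩ := hR i j hij
    have hb' : b ∈ ⋃ k ∈ p.support, A k := Set.mem_biUnion p.start_mem_support hb
    have hunion : ⋃ k ∈ (p.cons hij).support, A k = A i ∪ ⋃ k ∈ p.support, A k := by
      simp [Set.iUnion_or, Set.iUnion_union_distrib]
    rw [hunion]
    exact connected_induce_union (hA i).preconnected ih.preconnected ha hb' hab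

lemma connected_induce_iUnion (hRconn : R.Connected) (hA : ∀ i, (G.induce (A i)).Connected)
    (hR : ∀ i j, R.Adj i j → ∃ a ∈ A i, ∃ b ∈ A j, G.Adj a b) :
    (G.induce (⋃ i, A i)).Connected := by
  obtain ⟨i⟩ := hRconn.nonempty
  obtain ⟨u, hu⟩ := (hA i).nonempty
  refine induce_connected_of_patches u (Set.mem_iUnion_of_mem i hu) fun {v} hv ↦ ?_
  obtain ⟨j, hj⟩ := Set.mem_iUnion.mp hv
  obtain ⟨p⟩ := hRconn i j
  exact ⟨_, Set.iUnion₂_subset_iUnion _ A, Set.mem_biUnion p.start_mem_support hu,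
    Set.mem_biUnion p.end_mem_support hj, connected_induce_biUnion_support hA hR p _ _⟩

end Graph

section MinSpanningTree

open SimpleGraph

variable {V M : Type*}

/-- `T` is a minimum spanning tree of `G` for the edge weights `w`. The weight of a tree is a
`finsum`, which is its total weight only if finitely many of its edges have nonzero weight. -/
structure IsMinSpanningTree_s11 [AddCommMonoid M] [LE M] (G : SimpleGraph V) (w : Sym2 V → M)
    (T : SimpleGraph V) : Prop where
  le : T ≤ G
  isTree : T.IsTree
  weight_le : ∀ T' : SimpleGraph V, T' ≤ G → T'.IsTree →
    ∑ᶠ e ∈ T.edgeSet, w e ≤ ∑ᶠ e ∈ T'.edgeSet, w e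

/-- `s(a, b)` is a lightest outgoing edge (LOE) of the vertex set `S`, oriented so that `a` is its
endpoint in `S`. -/
structure IsLightestOutgoingEdge_s11 [LE M] (G : SimpleGraph V) (w : Sym2 V → M) (S : Set V)
    (a b : V) : Prop where
  adj : G.Adj a b
  left_mem : a ∈ S
  right_notMem : b ∉ S
  weight_le : ∀ u v : V, G.Adj u v → u ∈ S → v ∉ S → w s(a, b) ≤ w s(u, v)

namespace IsMinSpanningTree_s11

variable [Finite V] [AddCommMonoid M] [PartialOrder M] [IsOrderedCancelAddMonoid M]
  {G T : SimpleGraph V} {w : Sym2 V → M}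

lemma weight_le_of_not_reachable_deleteEdges (hT : IsMinSpanningTree_s11 G w T) {a b : V}
    (hab : G.Adj a b) {e : Sym2 V} (he : ¬ (T.deleteEdges {e}).Reachable a b) :
    w e ≤ w s(a, b) := by
  set F := T.deleteEdges {e} with hF
  have hle : F ⊔ edge a b ≤ G :=
    sup_le ((deleteEdges_le _).trans hT.le) ((edge_le_iff G).mpr (.inr hab))
  have heT : e ∈ T.edgeSet := by
    obtain ⟨p⟩ := hT.isTree.connected a b
    exact p.edges_subset_edgeSet (p.mem_edges_of_not_reachable_deleteEdges he)
  have hTF : T.edgeSet = insert e F.edgeSet := by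
    rw [hF, edgeSet_deleteEdges, Set.insert_sdiff_singleton, Set.insert_eq_of_mem heT]
  have hFab : (F ⊔ edge a b).edgeSet = insert s(a, b) F.edgeSet := by
    rw [edgeSet_sup, edgeSet_edge_of_ne hab.ne, Set.union_singleton]
  have heF : e ∉ F.edgeSet := by simp [hF]
  have habF : s(a, b) ∉ F.edgeSet := fun h ↦ he (Adj.reachable h)
  have hweight := hT.weight_le _ hle (isTree_deleteEdges_sup_edge_s11 hT.isTree he)
  rw [hTF, hFab, finsum_mem_insert w heF (Set.toFinite _),
    finsum_mem_insert w habF (Set.toFinite _)] at hweight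
  exact le_of_add_le_add_right hweight

lemma adj_of_isLightestOutgoingEdge (hT : IsMinSpanningTree_s11 G w T)
    (hw : Set.InjOn w G.edgeSet) {S : Set V} {a b : V} (hab : IsLightestOutgoingEdge_s11 G w S a b) :
    T.Adj a b := by
  obtain ⟨p, hp⟩ := hT.isTree.connected.exists_isPath a b
  obtain ⟨d, hdp, hdS, hdS'⟩ := p.exists_boundary_dart S hab.left_mem hab.right_notMem
  have hdG : G.Adj d.fst d.snd := hT.le d.adj
  have hle : w s(d.fst, d.snd) ≤ w s(a, b) :=
    hT.weight_le_of_not_reachable_deleteEdges hab.adj <|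
      not_reachable_deleteEdges_of_mem_edges_s11 hT.isTree.isAcyclic hp (List.mem_map_of_mem hdp)
  have heq : s(d.fst, d.snd) = s(a, b) :=
    hw hdG hab.adj (hle.antisymm (hab.weight_le _ _ hdG hdS hdS'))
  rw [← mem_edgeSet, ← heq]
  exact d.edge_mem

end IsMinSpanningTree_s11

end MinSpanningTree

theorem merged_parts_connected_in_mst_general {V ι M : Type*} [Finite V] [AddCommMonoid M]
    [PartialOrder M] [IsOrderedCancelAddMonoid M] {G T : SimpleGraph V} {w : Sym2 V → M}
    (hw : Set.InjOn w G.edgeSet) (hT : IsMinSpanningTree_s11 G w T) {A : ι → Set V}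
    (hA : ∀ i, (T.induce (A i)).Connected) {loe : ι → V × V}
    (hloe : ∀ i, IsLightestOutgoingEdge_s11 G w (A i) (loe i).1 (loe i).2)
    (C : (SimpleGraph.fromRel
      fun i j ↦ ∃ k, (loe k).1 ∈ A i ∧ (loe k).2 ∈ A j).ConnectedComponent) :
    (T.induce (⋃ i ∈ C.supp, A i)).Connected := by
  have hloeT (k : ι) : T.Adj (loe k).1 (loe k).2 := hT.adj_of_isLightestOutgoingEdge hw (hloe k)
  rw [Set.biUnion_eq_iUnion]
  refine connected_induce_iUnion C.connected_toSimpleGraph (fun i ↦ hA i) ?_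
  rintro i j ⟨-, ⟨k, hi, hj⟩ | ⟨k, hj, hi⟩⟩
  · exact ⟨_, hi, _, hj, hloeT k⟩
  · exact ⟨_, hi, _, hj, (hloeT k).symm⟩

/-- Let `G` be a finite connected simple graph with injective real edge weights, `T` its
(unique) minimum spanning tree, and let the vertex set be partitioned into `k ≥ 2` parts
(the fibers of a surjection `f : V → ι`), each inducing a connected subgraph of `T`.
Let `loe i` be the lightest outgoing edge of the part `i`. Merging the parts along these
edges — taking the unions of the parts over each connected component of the graph on the
parts in which distinct parts are adjacent iff some `loe` joins them — every part of the
merged partition again induces a connected subgraph of `T`. -/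
theorem merged_parts_connected_in_mst {V ι : Type*} [Fintype V] [Fintype ι]
    (G : SimpleGraph V) (hG : G.Connected)
    (w : Sym2 V → ℝ) (hw : Set.InjOn w G.edgeSet)
    (T : SimpleGraph V) (hTG : T ≤ G) (hT : T.IsTree)
    (hmin : ∀ T' : SimpleGraph V, T' ≤ G → T'.IsTree → mstWeight w T ≤ mstWeight w T')
    (f : V → ι) (hf : Function.Surjective f) (hk2 : 2 ≤ Fintype.card ι)
    (hconn : ∀ i : ι, (T.induce (f ⁻¹' {i})).Connected)
    (loe : ι → V × V)
    (hloe : ∀ i : ι, G.Adj (loe i).1 (loe i).2 ∧ f (loe i).1 = i ∧ f (loe i).2 ≠ i ∧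
      ∀ u v : V, G.Adj u v → f u = i → f v ≠ i →
        w s((loe i).1, (loe i).2) ≤ w s(u, v)) :
    ∀ C : (SimpleGraph.fromRel
        (fun i j : ι => ∃ k' : ι, f (loe k').1 = i ∧ f (loe k').2 = j)).ConnectedComponent,
      (T.induce (⋃ i ∈ C.supp, f ⁻¹' {i})).Connected :=
  merged_parts_connected_in_mst_general hw ⟨hTG, hT, hmin⟩ hconn fun i ↦
    ⟨(hloe i).1, (hloe i).2.1, (hloe i).2.2.1, (hloe i).2.2.2⟩
end
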